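/- arXiv:math/0211013 — 5 statements merged into one kernel-verified Lean document; each statement's English description precedes it below -/
import Mathlib

section
/- Let m < n be natural numbers. Let K_g be the interval polynomial family of degree at most m with bounds b̲_i ≤ b̅_i (i = 0,…,m), and let K_f be the interval polynomial family of degree n with bounds a̲_i ≤ a̅_i (i = 0,…,n) and a̲_n > 0, with Kharitonov vertices g_{ij} and f_{ij} (i,j ∈ {1,2}) respectively. Fix δ ∈ (0,1) and θ ∈ [−π, π], and for indices i₁,j₁,i₂,j₂ ∈ {1,2} set J_{i₁j₁i₂j₂}(s) = g_{i₁j₁}(s) + (1 + δe^{iθ}) f_{i₂j₂}(s). Then every complex polynomial in the family W(s) = { g(s) + (1 + δe^{iθ}) f(s) : g ∈ K_g, f ∈ K_f } is Hurwitz stable if and only if the twelve polynomials J_{i₁j₁i₂j₂} with (i₁,j₁,i₂,j₂) ∈ {(1,1,1,1), (1,2,1,2), (2,2,2,2), (2,1,2,1), (1,1,1,2), (1,2,2,2), (2,2,2,1), (2,1,1,1), (1,2,1,1), (2,2,1,2), (2,1,2,2), (1,1,2,1)} are Hurwitz stable. -/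
/-!
The forward implication is clear, since every vertex polynomial belongs to the family.  Conversely,
write `c = 1 + δ e^{iθ}`, so that `0 < re c`; nothing else about `c` is needed.

*Value sets.*  For `ω ≥ 0` the values `f(iω)`, `f ∈ K_f`, lie in the rectangle with sides parallel
to the axes whose corners are the values of the four Kharitonov vertices, and likewise for `K_g`.
Number the corners counterclockwise by `ZMod 4`, so that the edge from corner `k` to corner `k + 1`
has outer normal `i ^ k`.  The value set of the family at `iω` is contained in the convex polygon
`R_g + c R_f`, whose edges have normals `i ^ k` and `c i ^ k`.  As `c` turns the axes by less than
a right angle, the corners of this polygon are values of `g_k + c f_q` with `q = k` or with `q` and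
`k` adjacent in the cycle: exactly the twelve polynomials of the statement.  The polygon is an
octagon whose corners depend on the sign of `im c`, or a rectangle if `im c = 0`.

*Zero exclusion* (`exists_proj_neg`, `eval_ne_zero_of_vertices`).  If `p` is stable and nonconstant,
then its logarithmic derivative has positive real part on the imaginary axis, so `p(iω)` turns
strictly counterclockwise as `ω` increases.  Suppose that the origin is in the polygon, that is, all
edge functionals `ω ↦ re (conj u_e * p_e(iω))` are nonnegative, where `u_e` is the outer normal of
the edge `e` and `p_e` the polynomial at an end point of it.  If one of them vanished, the origin would lie on
that edge, strictly between its end points, which rotate in the same sense about the origin and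
therefore move the line of the edge in opposite directions.  But the edge functional takes the same
value at both end points for all `ω`, a contradiction.  So all functionals are positive; hence the
set of all real `ω` where all are nonnegative is both open and closed.  It is not all of `ℝ` by the
behaviour at infinity, because the leading coefficients `c a` dominate, so it is empty.

Thus no member of the family vanishes at `iω` with `ω ≥ 0`; conjugating, which replaces `c` by
`conj c`, deals with `ω ≤ 0`.

*Continuity of roots* (`stable_of_segment`).  Along the segment from a stable vertex polynomial to
any member of the family the degree stays equal to `n` and no root meets the imaginary axis, so
stability is an open and closed condition on the segment and holds at the other end.
-/

open Polynomial Complex Set Real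

noncomputable section

/-- A complex polynomial is Hurwitz stable if it is nonzero and all its roots
have negative real part. -/
def HurwitzStableC (p : Polynomial ℂ) : Prop :=
  p ≠ 0 ∧ ∀ z : ℂ, p.IsRoot z → z.re < 0

/-- The `k`-th coefficient of the Kharitonov vertex polynomial with indices
`i, j ∈ {1, 2}`, built from lower bounds `l` and upper bounds `u`:
even coefficients follow the pattern of `α⁽ⁱ⁾`, odd ones follow `β⁽ʲ⁾`. -/
def khCoeff (l u : ℕ → ℝ) (i j : ℕ) (k : ℕ) : ℝ :=
  if k % 2 = 0 then
    if (k / 2) % 2 = 0 then (if i = 1 then l k else u k)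
    else (if i = 1 then u k else l k)
  else
    if (k / 2) % 2 = 0 then (if j = 1 then l k else u k)
    else (if j = 1 then u k else l k)

/-- The Kharitonov vertex polynomial `f_{ij}(s) = α⁽ⁱ⁾(s²) + s β⁽ʲ⁾(s²)`. -/
def khVertex (n : ℕ) (l u : ℕ → ℝ) (i j : ℕ) : Polynomial ℝ :=
  ∑ k ∈ Finset.range (n + 1), Polynomial.C (khCoeff l u i j k) * Polynomial.X ^ k

/-- The interval polynomial family with coefficient bounds `l k ≤ c k ≤ u k`
for `k = 0, …, n`. -/
def intervalFamily (n : ℕ) (l u : ℕ → ℝ) : Set (Polynomial ℝ) :=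
  { f | f.natDegree ≤ n ∧ ∀ k ≤ n, f.coeff k ∈ Set.Icc (l k) (u k) }

/-- The twelve critical vertex index tuples `(i₁, j₁, i₂, j₂)`. -/
def twelveTuples : List (ℕ × ℕ × ℕ × ℕ) :=
  [(1,1,1,1), (1,2,1,2), (2,2,2,2), (2,1,2,1), (1,1,1,2), (1,2,2,2),
   (2,2,2,1), (2,1,1,1), (1,2,1,1), (2,2,1,2), (2,1,2,2), (1,1,2,1)]

open scoped ComplexConjugate

/-! ### Rotation of stable polynomials along the imaginary axis -/

/-- The logarithmic derivative is the sum of the `1 / (z - w)` over the roots `w`, and each summand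
has positive real part when `w` is in the open left half-plane. -/
lemma stable_re_logDeriv_pos {p : ℂ[X]} (hp : HurwitzStableC p) (hd : 0 < p.natDegree) {z : ℂ}
    (hz : z.re = 0) : 0 < (p.derivative.eval z / p.eval z).re := by
  have hne : p.eval z ≠ 0 := fun h => by
    have := hp.2 z h
    linarith
  have hs : p.Splits := IsAlgClosed.splits p
  rw [hs.eval_derivative_div_eval_of_ne_zero hne]
  have hcard : 0 < p.roots.card := by rw [← hs.natDegree_eq_card_roots]; exact hd
  have key : ∀ s : Multiset ℂ, (∀ w ∈ s, w.re < 0) → 0 < s.card →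
      0 < ((s.map fun w => 1 / (z - w)).sum).re := by
    intro s
    induction s using Multiset.induction with
    | empty => intro _ h; simp at h
    | cons a s ih =>
      intro h _
      have ha : 0 < (1 / (z - a)).re := by
        have hre : 0 < (z - a).re := by
          have := h a (Multiset.mem_cons_self a s)
          simp only [sub_re]; linarith
        rw [one_div, inv_re]
        refine div_pos hre (normSq_pos.2 fun h0 => ?_)
        rw [h0] at hre; simp at hre
      rw [Multiset.map_cons, Multiset.sum_cons, add_re]
      rcases Nat.eq_zero_or_pos s.card with h0 | h0
      · rw [Multiset.card_eq_zero] at h0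
        subst h0; simpa using ha
      · exact add_pos ha (ih (fun w hw => h w (Multiset.mem_cons_of_mem hw)) h0)
  exact key _ (fun w hw => hp.2 w (isRoot_of_mem_roots hw)) hcard

/-- The component `re (conj u * p(iω))` of `p(iω)` along `u`, viewing `ℂ` as the Euclidean plane;
it is not divided by `‖u‖`. -/
def proj (u : ℂ) (p : ℂ[X]) (ω : ℝ) : ℝ := (conj u * p.eval (ω * I)).re

lemma continuous_proj (u : ℂ) (p : ℂ[X]) : Continuous (proj u p) := by
  unfold proj
  have : Continuous fun ω : ℝ => p.eval ((ω : ℂ) * I) :=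
    p.continuous.comp (by fun_prop)
  fun_prop

lemma hasDerivAt_proj (u : ℂ) (p : ℂ[X]) (ω : ℝ) :
    HasDerivAt (proj u p) (conj u * (p.derivative.eval (ω * I) * I)).re ω := by
  have h1 : HasDerivAt (fun t : ℝ => (t : ℂ) * I) I ω := by
    simpa using (Complex.ofRealCLM.hasDerivAt (x := ω)).mul_const I
  have h2 := (p.hasDerivAt ((ω : ℂ) * I)).comp ω h1
  have h3 := h2.const_mul (conj u)
  exact (Complex.reCLM.hasFDerivAt).comp_hasDerivAt ω h3

/-- If a stable `p` has `p(iω)` orthogonal to `u`, so that `conj u * p(iω) = i y`, then the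
component along `u` has derivative `-(y * r)`, where `r > 0` is the real part of the logarithmic
derivative of `p` at `iω`: the value rotates counterclockwise. -/
lemma deriv_proj_eq {p : ℂ[X]} (hp : HurwitzStableC p) (hd : 0 < p.natDegree) {u : ℂ} (hu : u ≠ 0)
    {ω : ℝ} (h0 : proj u p ω = 0) :
    ∃ r y d : ℝ, 0 < r ∧ y ≠ 0 ∧ y = (conj u * p.eval (ω * I)).im ∧ d = -(y * r) ∧
      HasDerivAt (proj u p) d ω := by
  have hz : ((ω : ℂ) * I).re = 0 := by simp
  have hne : p.eval ((ω : ℂ) * I) ≠ 0 := fun h => by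
    have := hp.2 _ h
    linarith
  refine ⟨_, _, _, stable_re_logDeriv_pos hp hd hz, ?_, rfl, rfl, ?_⟩
  · intro h
    have : conj u * p.eval ((ω : ℂ) * I) = 0 := Complex.ext h0 h
    simp [hu, hne] at this
  · convert hasDerivAt_proj u p ω using 1
    have : p.derivative.eval ((ω : ℂ) * I)
        = p.eval ((ω : ℂ) * I) * (p.derivative.eval ((ω : ℂ) * I) / p.eval ((ω : ℂ) * I)) := by
      field_simp
    generalize p.derivative.eval ((ω : ℂ) * I) / p.eval ((ω : ℂ) * I) = q at *
    rw [this]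
    have e : conj u * (p.eval ((ω : ℂ) * I) * q * I) = (conj u * p.eval ((ω : ℂ) * I)) * (q * I) := by
      ring
    rw [e, mul_re, show (conj u * p.eval ((ω : ℂ) * I)).re = 0 from h0]
    simp

/-- When `w` is orthogonal to `u`, it is a real multiple of `i u`, so its component along `v` is
determined by the cross product of `u` and `v`. -/
lemma im_mul_eq_normSq_mul (u v w : ℂ) (h : (conj u * w).re = 0) :
    (conj u * v).im * (conj u * w).im = normSq u * (conj v * w).re := by
  simp only [mul_re, mul_im, conj_re, conj_im, normSq_apply] at *
  linear_combination -(u.re * v.re + u.im * v.im) * h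

/-! ### A moving polygon with stable corners misses the origin -/

/-- A closed polygon whose edges are indexed by `ι`: the edge `e` runs from `S e (iω)` to
`E e (iω)`, has the fixed normal `u e`, and is followed by the edge `next e`.  Suppose that
all corners are stable and the normals turn counterclockwise.  If some edge
functional is negative somewhere on `ℝ`, then at every `ω` some edge functional is negative, so the origin is outside the polygon. -/
lemma exists_proj_neg {ι : Type*} [Finite ι] (S E : ι → ℂ[X]) (u : ι → ℂ) (prev next : ι → ι)
    (hS : ∀ e, HurwitzStableC (S e)) (hE : ∀ e, HurwitzStableC (E e))
    (hSd : ∀ e, 0 < (S e).natDegree) (hEd : ∀ e, 0 < (E e).natDegree)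
    (hnp : ∀ e, next (prev e) = e) (hnext : ∀ e, E e = S (next e))
    (hedge : ∀ e ω, proj (u e) (S e) ω = proj (u e) (E e) ω)
    (hun : ∀ e, 0 < (conj (u e) * u (next e)).im)
    (hfar : ∃ e ω, proj (u e) (S e) ω < 0) (ω : ℝ) : ∃ e, proj (u e) (S e) ω < 0 := by
  by_contra! hcon
  have hprev : ∀ e, S e = E (prev e) := fun e => by rw [hnext, hnp]
  have hup : ∀ e, (conj (u e) * u (prev e)).im < 0 := fun e => by
    have := hun (prev e)
    rw [hnp] at this
    simp only [mul_im, conj_re, conj_im] at this ⊢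
    linarith
  have hpos : ∀ ω, (∀ e, 0 ≤ proj (u e) (S e) ω) → ∀ e, 0 < proj (u e) (S e) ω := by
    intro ω h e
    refine lt_of_le_of_ne (h e) fun h0 => ?_
    have hu : u e ≠ 0 := fun h' => by have := hun e; simp [h'] at this
    obtain ⟨r, y, d, hr, hy, hyd, hd, hD⟩ := deriv_proj_eq (hS e) (hSd e) hu h0.symm
    obtain ⟨r', y', d', hr', hy', hyd', hd', hD'⟩ := deriv_proj_eq (hE e) (hEd e) hu
      ((hedge e ω).symm.trans h0.symm)
    have hdd : d = d' := by
      rw [← funext (hedge e)] at hD'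
      exact hD.unique hD'
    have k1 : 0 ≤ proj (u (prev e)) (S e) ω := by
      rw [hprev, ← hedge]; exact h _
    have k2 : 0 ≤ proj (u (next e)) (E e) ω := by
      rw [hnext]; exact h _
    have m1 := im_mul_eq_normSq_mul (u e) (u (prev e)) _ h0.symm
    have m2 := im_mul_eq_normSq_mul (u e) (u (next e)) _ ((hedge e ω).symm.trans h0.symm)
    rw [← hyd'] at m2
    rw [← hyd] at m1
    -- The two neighbouring edges force the end points `S e` and `E e` to opposite sides of the
    -- origin on the line of the edge `e`.
    have y1 : y ≤ 0 := by
      have := mul_nonneg (normSq_nonneg (u e)) k1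
      unfold proj at this
      rw [← m1] at this
      by_contra! hc
      nlinarith [hup e]
    have y2 : 0 ≤ y' := by
      have := mul_nonneg (normSq_nonneg (u e)) k2
      unfold proj at this
      rw [← m2] at this
      by_contra! hc
      nlinarith [hun e]
    have y1' := lt_of_le_of_ne y1 hy
    have y2' := lt_of_le_of_ne y2 hy'.symm
    nlinarith [mul_pos y2' hr', mul_pos (neg_pos.2 y1') hr]
  have hcl : IsClopen {ω : ℝ | ∀ e, 0 ≤ proj (u e) (S e) ω} := by
    constructor
    · simp only [ofPred_forall]
      exact isClosed_iInter fun e => isClosed_le continuous_const (continuous_proj _ _)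
    · have : {ω : ℝ | ∀ e, 0 ≤ proj (u e) (S e) ω} = {ω : ℝ | ∀ e, 0 < proj (u e) (S e) ω} := by
        ext ω
        exact ⟨hpos ω, fun h e => (h e).le⟩
      rw [this]
      simp only [ofPred_forall]
      exact isOpen_iInter_of_finite fun e => isOpen_lt continuous_const (continuous_proj _ _)
  have := hcl.eq_univ ⟨ω, hcon⟩
  obtain ⟨e, ω', h⟩ := hfar
  have h2 : ω' ∈ {ω : ℝ | ∀ e, 0 ≤ proj (u e) (S e) ω} := by rw [this]; trivial
  exact absurd (h2 e) (not_le.2 h)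

/-- The function `proj u p` is a real polynomial in `ω`; a negative coefficient in degree `n`
drives it to `-∞`. -/
lemma exists_proj_neg_of_coeff {p : ℂ[X]} {n : ℕ} (hn : 0 < n) (hd : p.natDegree ≤ n) {u : ℂ}
    (hu : (conj u * (p.coeff n * I ^ n)).re < 0) : ∃ ω, proj u p ω < 0 := by
  set q : ℝ[X] := ∑ k ∈ Finset.range (n + 1), C (conj u * (p.coeff k * I ^ k)).re * X ^ k with hq
  have hc : q.coeff n = (conj u * (p.coeff n * I ^ n)).re := by
    rw [hq, finsetSum_coeff]
    simp only [coeff_C_mul_X_pow, Finset.sum_ite_eq]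
    rw [if_pos (by simp)]
  have hqd : q.natDegree ≤ n := by
    refine natDegree_sum_le_of_forall_le _ _ fun k hk => ?_
    exact (natDegree_C_mul_X_pow_le _ _).trans (by simp at hk; omega)
  have hqe : q.natDegree = n := natDegree_eq_of_le_of_coeff_ne_zero hqd (by rw [hc]; exact hu.ne)
  have ht := q.tendsto_atBot_of_leadingCoeff_nonpos
    (natDegree_pos_iff_degree_pos.1 (by omega)) (by rw [leadingCoeff, hqe, hc]; exact hu.le)
  obtain ⟨ω, hω⟩ := (ht.eventually (Filter.eventually_lt_atBot 0)).exists
  refine ⟨ω, ?_⟩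
  have heq : proj u p ω = q.eval ω := by
    unfold proj
    rw [eval_eq_sum_range' (Nat.lt_succ_of_le hd), Finset.mul_sum, re_sum, hq, eval_finsetSum]
    refine Finset.sum_congr rfl fun k _ => ?_
    rw [mul_pow, eval_mul, eval_C, eval_pow, eval_X, ← re_mul_ofReal]
    congr 1
    push_cast
    ring
  rw [heq]; exact hω

/-! ### Stability along a segment of polynomials -/

/-- Continuity of roots along the segment from `p₀` to `p₁`.  The coefficients in degree `n` are
positive multiples of the same `c`, so no root escapes to infinity; if none crosses the imaginary
axis, stability passes from `p₀` to `p₁`. -/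
lemma stable_of_segment {p₀ p₁ : ℂ[X]} {n : ℕ} (hd₀ : p₀.natDegree ≤ n) (hd₁ : p₁.natDegree ≤ n)
    {c : ℂ} {a₀ a₁ : ℝ} (hc : c ≠ 0) (ha₀ : 0 < a₀) (ha₁ : 0 < a₁)
    (h₀ : p₀.coeff n = c * a₀) (h₁ : p₁.coeff n = c * a₁) (hst : HurwitzStableC p₀)
    (haxis : ∀ t ∈ Icc (0 : ℝ) 1, ∀ z : ℂ, z.re = 0 → p₀.eval z + t * (p₁.eval z - p₀.eval z) ≠ 0) :
    HurwitzStableC p₁ := by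
  set p : ℝ → ℂ[X] := fun t => p₀ + C (t : ℂ) * (p₁ - p₀) with hp
  have hev : ∀ t z, (p t).eval z = p₀.eval z + t * (p₁.eval z - p₀.eval z) := by
    intro t z; simp [hp]
  have hdeg' : ∀ t, (p t).natDegree ≤ n := by
    intro t
    refine natDegree_add_le_of_degree_le hd₀ ((natDegree_C_mul_le _ _).trans ?_)
    exact (natDegree_sub_le _ _).trans (by omega)
  have hco : ∀ t, (p t).coeff n = c * ((1 - t) * a₀ + t * a₁ : ℝ) := by
    intro t; simp [hp, h₀, h₁]; ring
  set μ := min a₀ a₁ with hμ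
  have hμ0 : 0 < μ := lt_min ha₀ ha₁
  have hlow : ∀ t ∈ Icc (0 : ℝ) 1, μ ≤ (1 - t) * a₀ + t * a₁ := by
    intro t ht
    nlinarith [min_le_left a₀ a₁, min_le_right a₀ a₁, ht.1, ht.2,
      mul_le_mul_of_nonneg_left (min_le_left a₀ a₁) (sub_nonneg.2 ht.2),
      mul_le_mul_of_nonneg_left (min_le_right a₀ a₁) ht.1]
  have hcn : 0 < ‖c‖ := norm_pos_iff.2 hc
  have hnorm : ∀ t ∈ Icc (0 : ℝ) 1, ‖c‖ * μ ≤ ‖(p t).coeff n‖ := by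
    intro t ht
    rw [hco, norm_mul, Complex.norm_real]
    exact mul_le_mul_of_nonneg_left ((hlow t ht).trans (le_abs_self _)) hcn.le
  have hcpos : 0 < ‖c‖ * μ := mul_pos hcn hμ0
  have hdeg : ∀ t ∈ Icc (0 : ℝ) 1, (p t).natDegree = n := fun t ht =>
    natDegree_eq_of_le_of_coeff_ne_zero (hdeg' t) (norm_pos_iff.1 (hcpos.trans_le (hnorm t ht)))
  have hne : ∀ t ∈ Icc (0 : ℝ) 1, p t ≠ 0 := fun t ht h => by
    have := hcpos.trans_le (hnorm t ht)
    rw [h] at this; simp at this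
  -- The Cauchy bound, made uniform in `t` by the lower bound on the leading coefficients.
  obtain ⟨R, hR⟩ : ∃ R : ℝ, ∀ t ∈ Icc (0 : ℝ) 1, ∀ z, (p t).eval z = 0 → ‖z‖ ≤ R := by
    refine ⟨(∑ k ∈ Finset.range n, (‖p₀.coeff k‖ + ‖p₁.coeff k - p₀.coeff k‖)) / (‖c‖ * μ) + 1, ?_⟩
    intro t ht z hz
    have hb := NNReal.coe_le_coe.2 (IsRoot.norm_lt_cauchyBound (hne t ht) hz).le
    rw [coe_nnnorm] at hb
    refine hb.trans ?_
    rw [cauchyBound, NNReal.coe_add, NNReal.coe_div, hdeg t ht]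
    have hl : ‖c‖ * μ ≤ ‖(p t).leadingCoeff‖ := by rw [leadingCoeff, hdeg t ht]; exact hnorm t ht
    have hsum0 : 0 ≤ ∑ k ∈ Finset.range n, (‖p₀.coeff k‖ + ‖p₁.coeff k - p₀.coeff k‖) :=
      Finset.sum_nonneg fun k _ => by positivity
    have hsup : (((Finset.range n).sup (fun k => ‖(p t).coeff k‖₊) : NNReal) : ℝ) ≤
        ∑ k ∈ Finset.range n, (‖p₀.coeff k‖ + ‖p₁.coeff k - p₀.coeff k‖) := by
      have : (Finset.range n).sup (fun k => ‖(p t).coeff k‖₊) ≤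
          ∑ k ∈ Finset.range n, (‖p₀.coeff k‖₊ + ‖p₁.coeff k - p₀.coeff k‖₊) := by
        refine Finset.sup_le fun k hk => ?_
        refine le_trans ?_ (Finset.single_le_sum
          (f := fun k => ‖p₀.coeff k‖₊ + ‖p₁.coeff k - p₀.coeff k‖₊)
          (fun _ _ => zero_le) hk)
        rw [← NNReal.coe_le_coe]
        push_cast
        simp only [hp, coeff_add, coeff_C_mul, coeff_sub]
        refine (norm_add_le _ _).trans (add_le_add le_rfl ?_)
        rw [norm_mul, Complex.norm_real, Real.norm_eq_abs, abs_of_nonneg ht.1]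
        exact mul_le_of_le_one_left (norm_nonneg _) ht.2
      have h2 := NNReal.coe_le_coe.2 this
      push_cast at h2
      exact h2
    refine add_le_add (div_le_div₀ hsum0 hsup hcpos hl) le_rfl
  let A : Set (Icc (0 : ℝ) 1) := {t | HurwitzStableC (p t)}
  -- Open: a root with nonnegative real part stays in the compact half-disc, where the stable
  -- `p t₀` is bounded away from zero.
  have hAo : IsOpen A := by
    rw [Metric.isOpen_iff]
    intro t₀ ht₀
    have hK : IsCompact ({z : ℂ | 0 ≤ z.re} ∩ Metric.closedBall 0 R) :=
      (isCompact_closedBall 0 R).inter_left (isClosed_le continuous_const continuous_re)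
    obtain ⟨ε, hε, hKε⟩ : ∃ ε > 0, ∀ z ∈ {z : ℂ | 0 ≤ z.re} ∩ Metric.closedBall 0 R,
        ε ≤ ‖(p t₀).eval z‖ := by
      refine hK.exists_forall_le' (p t₀).continuous.norm.continuousOn fun z hz => ?_
      refine norm_pos_iff.2 fun h => ?_
      have h2 := ht₀.2 z h
      have := hz.1
      simp only [mem_ofPred_eq] at this
      linarith
    obtain ⟨D, hD⟩ := (isCompact_closedBall (0 : ℂ) R).exists_bound_of_continuousOn
      (p₁ - p₀).continuous.continuousOn
    refine ⟨ε / (|D| + 1), by positivity, fun t ht => ⟨hne t t.2, fun z hz => ?_⟩⟩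
    by_contra! hre
    have hzR : z ∈ Metric.closedBall (0 : ℂ) R := by
      simpa using hR t t.2 z hz
    have e1 := hKε z ⟨hre, hzR⟩
    have e2 := hD z hzR
    have e3 : (p t₀).eval z = ((t₀ : ℝ) - (t : ℝ) : ℝ) * (p₁ - p₀).eval z := by
      have : (p t).eval z = 0 := hz
      rw [hev] at this ⊢
      rw [eval_sub]; push_cast
      linear_combination this
    rw [e3, norm_mul, Complex.norm_real, Real.norm_eq_abs] at e1
    rw [Metric.mem_ball, dist_comm, Subtype.dist_eq, Real.dist_eq, lt_div_iff₀ (by positivity)] at ht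
    have : |(t₀ : ℝ) - t| * ‖(p₁ - p₀).eval z‖ ≤ |(t₀ : ℝ) - t| * (|D| + 1) :=
      mul_le_mul_of_nonneg_left (by linarith [le_abs_self D]) (abs_nonneg _)
    linarith
  -- Closed: if `p t₀` has a root `z` with `0 < z.re` while `p t` is stable, each of the `n` factors
  -- of `p t` at `z` is at least `z.re` in norm, so `p t` is far from zero at `z`.
  have hAc : IsOpen Aᶜ := by
    rw [Metric.isOpen_iff]
    intro t₀ ht₀
    have : ∃ z : ℂ, (p t₀).eval z = 0 ∧ 0 < z.re := by
      by_contra! h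
      refine ht₀ ⟨hne t₀ t₀.2, fun z hz => lt_of_le_of_ne (h z hz) fun h0 => ?_⟩
      exact haxis t₀ t₀.2 z h0 (by rw [← hev]; exact hz)
    obtain ⟨z, hz, hre⟩ := this
    refine ⟨‖c‖ * μ * z.re ^ n / (‖(p₁ - p₀).eval z‖ + 1), by positivity, fun t ht hst => ?_⟩
    have hs : (p t).Splits := IsAlgClosed.splits _
    have e1 := hs.eval_eq_prod_roots z
    have hprod : z.re ^ n ≤ ‖((p t).roots.map (z - ·)).prod‖ := by
      have key : ∀ s : Multiset ℂ, (∀ w ∈ s, w.re < 0) →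
          z.re ^ s.card ≤ ‖(s.map (z - ·)).prod‖ := by
        intro s
        induction s using Multiset.induction with
        | empty => simp
        | cons a s ih =>
          intro h
          rw [Multiset.map_cons, Multiset.prod_cons, norm_mul, Multiset.card_cons, pow_succ']
          refine mul_le_mul ?_ (ih fun w hw => h w (Multiset.mem_cons_of_mem hw)) (by positivity)
            (norm_nonneg _)
          refine le_trans ?_ (re_le_norm _)
          have := h a (Multiset.mem_cons_self a s)
          simp only [sub_re]; linarith
      have := key (p t).roots fun w hw => hst.2 w (isRoot_of_mem_roots hw)
      rwa [← hs.natDegree_eq_card_roots, hdeg t t.2] at this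
    have e2 : ‖c‖ * μ * z.re ^ n ≤ ‖(p t).eval z‖ := by
      rw [e1, norm_mul]
      refine mul_le_mul ?_ hprod (by positivity) (norm_nonneg _)
      rw [leadingCoeff, hdeg t t.2]; exact hnorm t t.2
    have e3 : (p t).eval z = ((t : ℝ) - (t₀ : ℝ) : ℝ) * (p₁ - p₀).eval z := by
      rw [hev] at hz ⊢
      rw [eval_sub]; push_cast
      linear_combination hz
    rw [e3, norm_mul, Complex.norm_real, Real.norm_eq_abs] at e2
    rw [Metric.mem_ball, Subtype.dist_eq, Real.dist_eq, lt_div_iff₀ (by positivity)] at ht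
    nlinarith [abs_nonneg ((t : ℝ) - t₀)]
  have huniv := (show IsClopen A from ⟨isOpen_compl_iff.1 hAc, hAo⟩).eq_univ
    ⟨⟨0, by simp⟩, by simpa [A, hp] using hst⟩
  have h1 : (⟨1, by simp⟩ : Icc (0 : ℝ) 1) ∈ A := by rw [huniv]; trivial
  simpa [A, hp] using h1

/-! ### The four directions and the corners of a Kharitonov rectangle -/

/-- The direction `i ^ k`, the outer normal of the edge from corner `k` to corner `k + 1` of a
rectangle with sides parallel to the axes. -/
def dir : ZMod 4 → ℂ := ![1, I, -1, -I]

/-- First index (that of the even part, hence of the real part on the imaginary axis) of the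
Kharitonov vertex at corner `k`.  The corners `0, 1, 2, 3` are the vertices
`(2,1), (2,2), (1,2), (1,1)`, in counterclockwise order (for `0 ≤ ω`) from the lower right. -/
def vi : ZMod 4 → ℕ := ![2, 2, 1, 1]

/-- Second index (that of the odd part) of the Kharitonov vertex at corner `k`; see `vi`. -/
def vj : ZMod 4 → ℕ := ![1, 2, 2, 1]

lemma zmod_four_cases : ∀ k : ZMod 4, k = 0 ∨ k = 1 ∨ k = 2 ∨ k = 3 := by decide

lemma dir_zero : dir 0 = 1 := rfl
lemma dir_one : dir 1 = I := rfl
lemma dir_two : dir 2 = -1 := rfl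
lemma dir_three : dir 3 = -I := rfl

lemma dir_succ (k : ZMod 4) : dir (k + 1) = I * dir k := by
  rcases zmod_four_cases k with rfl | rfl | rfl | rfl
  · rw [show (0 + 1 : ZMod 4) = 1 from rfl, dir_one, dir_zero]; simp
  · rw [show (1 + 1 : ZMod 4) = 2 from rfl, dir_one, dir_two]; simp
  · rw [show (2 + 1 : ZMod 4) = 3 from rfl, dir_two, dir_three]; simp
  · rw [show (3 + 1 : ZMod 4) = 0 from rfl, dir_three, dir_zero]; simp

lemma dir_pred (k : ZMod 4) : dir (k - 1) = -I * dir k := by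
  have := dir_succ (k - 1)
  rw [sub_add_cancel] at this
  rw [this, ← mul_assoc]; simp

lemma dir_natCast (n : ℕ) : dir n = I ^ n := by
  induction n with
  | zero => simp [dir_zero]
  | succ n ih => rw [Nat.cast_succ, dir_succ, ih, pow_succ']

lemma conj_dir_mul (x y : ℂ) (k : ZMod 4) : conj (x * dir k) * (y * dir k) = conj x * y := by
  have : conj (dir k) * dir k = 1 := by
    rcases zmod_four_cases k with rfl | rfl | rfl | rfl
    · simp [dir_zero]
    · simp [dir_one]
    · simp [dir_two]
    · simp [dir_three]
  rw [map_mul]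
  linear_combination (conj x * y) * this

lemma proj_add (v : ℂ) (p q : ℂ[X]) (ω : ℝ) : proj v (p + q) ω = proj v p ω + proj v q ω := by
  simp only [proj, eval_add, mul_add, add_re]

lemma proj_C_mul (v c : ℂ) (p : ℂ[X]) (ω : ℝ) : proj v (C c * p) ω = proj (conj c * v) p ω := by
  simp only [proj, eval_mul, eval_C, map_mul, conj_conj]
  congr 1; ring

lemma proj_lin (a b : ℝ) (v w : ℂ) (p : ℂ[X]) (ω : ℝ) :
    proj (a * v + b * w) p ω = a * proj v p ω + b * proj w p ω := by
  simp only [proj, map_add, map_mul, conj_ofReal, add_mul, add_re, mul_assoc, re_ofReal_mul]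

lemma mul_dir_succ (c : ℂ) (k : ZMod 4) :
    c * dir k = (c.re : ℂ) * dir k + (c.im : ℂ) * dir (k + 1) := by
  rw [dir_succ]
  nth_rewrite 1 [← re_add_im c]
  ring

lemma mul_dir_pred (c : ℂ) (k : ZMod 4) :
    c * dir k = (c.re : ℂ) * dir k + ((-c.im : ℝ) : ℂ) * dir (k - 1) := by
  rw [dir_pred]
  nth_rewrite 1 [← re_add_im c]
  push_cast
  ring

lemma conj_mul_dir_pred (c : ℂ) (k : ZMod 4) :
    conj c * dir k = (c.re : ℂ) * dir k + (c.im : ℂ) * dir (k - 1) := by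
  rw [mul_dir_pred, conj_re, conj_im, neg_neg]

lemma conj_mul_dir_succ (c : ℂ) (k : ZMod 4) :
    conj c * dir k = (c.re : ℂ) * dir k + ((-c.im : ℝ) : ℂ) * dir (k + 1) := by
  rw [mul_dir_succ, conj_re, conj_im]

lemma conj_mul_mul_dir (c : ℂ) (k : ZMod 4) :
    conj c * (c * dir k) = ((normSq c : ℝ) : ℂ) * dir k + ((0 : ℝ) : ℂ) * dir k := by
  rw [normSq_eq_conj_mul_self]; push_cast; ring

/-! ### Zero exclusion -/

/-- The case of `exists_proj_neg` for an octagon with corners `A 0, B 0, A 1, B 1, …`, whose edges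
from `A k` to `B k` have normal `u k` and those from `B k` to `A (k + 1)` have normal `v k`. -/
lemma not_forall_proj_nonneg_alternating (A B : ZMod 4 → ℂ[X]) (u v : ZMod 4 → ℂ)
    (hA : ∀ k, HurwitzStableC (A k)) (hB : ∀ k, HurwitzStableC (B k))
    (hAd : ∀ k, 0 < (A k).natDegree) (hBd : ∀ k, 0 < (B k).natDegree)
    (hAB : ∀ k ω, proj (u k) (A k) ω = proj (u k) (B k) ω)
    (hBA : ∀ k ω, proj (v k) (B k) ω = proj (v k) (A (k + 1)) ω)
    (huv : ∀ k, 0 < (conj (u k) * v k).im) (hvu : ∀ k, 0 < (conj (v k) * u (k + 1)).im)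
    (hfar : ∃ k ω, proj (v k) (B k) ω < 0) (ω : ℝ)
    (hu : ∀ k, 0 ≤ proj (u k) (A k) ω) (hv : ∀ k, 0 ≤ proj (v k) (B k) ω) : False := by
  obtain ⟨e, he⟩ := exists_proj_neg (ι := ZMod 4 ⊕ ZMod 4)
    (Sum.elim A B) (Sum.elim B fun k => A (k + 1)) (Sum.elim u v)
    (Sum.elim (fun k => Sum.inr (k - 1)) Sum.inl) (Sum.elim Sum.inr fun k => Sum.inl (k + 1))
    (Sum.rec hA hB) (Sum.rec hB fun k => hA _) (Sum.rec hAd hBd) (Sum.rec hBd fun k => hAd _)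
    (Sum.rec (fun k => congrArg Sum.inl (sub_add_cancel k 1)) fun _ => rfl)
    (Sum.rec (fun _ => rfl) fun _ => rfl) (Sum.rec hAB hBA) (Sum.rec huv hvu)
    (let ⟨k, h⟩ := hfar; ⟨Sum.inr k, h⟩) ω
  rcases e with k | k
  · exact absurd he (not_lt.2 (hu k))
  · exact absurd he (not_lt.2 (hv k))

/-- Zero exclusion for two rectangles: `G k` and `F k` play the corners of the rectangles of `g`
and `f`, as polynomials.  If `g(iω)` and `f(iω)` are in the rectangles and all sums
`G k + c F m` with equal or adjacent indices are stable, then `g + c f` does not vanish at `iω`. -/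
lemma eval_ne_zero_of_vertices (G F : ZMod 4 → ℂ[X]) (c : ℂ) (hc : 0 < c.re) (g f : ℂ[X]) (ω : ℝ)
    (hGe : ∀ k ω, proj (dir k) (G k) ω = proj (dir k) (G (k + 1)) ω)
    (hFe : ∀ k ω, proj (dir k) (F k) ω = proj (dir k) (F (k + 1)) ω)
    (hg : ∀ k, proj (dir k) g ω ≤ proj (dir k) (G k) ω)
    (hf : ∀ k, proj (dir k) f ω ≤ proj (dir k) (F k) ω)
    (hst : ∀ k m, m = k ∨ m = k + 1 ∨ k = m + 1 → HurwitzStableC (G k + C c * F m))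
    (hdeg : ∀ k m, 0 < (G k + C c * F m).natDegree)
    (hfar : ∃ j, ∀ k m, ∃ ω, proj (c * dir j) (G k + C c * F m) ω < 0) :
    (g + C c * f).eval (ω * I) ≠ 0 := by
  intro h0
  have hz : ∀ u, proj u g ω + proj (conj c * u) f ω = 0 := fun u => by
    rw [← proj_C_mul, ← proj_add, proj, h0]; simp
  have hg' : ∀ k, proj (dir k) g ω ≤ proj (dir k) (G (k + 1)) ω := fun k => by
    rw [← hGe]; exact hg k
  have hf' : ∀ k, proj (dir k) f ω ≤ proj (dir k) (F (k + 1)) ω := fun k => by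
    rw [← hFe]; exact hf k
  have hcn : 0 < normSq c := normSq_pos.2 fun h => by rw [h] at hc; simp at hc
  obtain ⟨j, hj⟩ := hfar
  -- A vanishing `g + c f` turns the rectangle inequalities for `g` and `f` into nonnegativity of
  -- the edge functionals of the polygon.
  have hJ : ∀ u k m, proj u (G k + C c * F m) ω = proj u (G k) ω + proj (conj c * u) (F m) ω :=
    fun u k m => by rw [proj_add, proj_C_mul]
  have hge : ∀ u k m, proj u g ω ≤ proj u (G k) ω →
      proj (conj c * u) f ω ≤ proj (conj c * u) (F m) ω → 0 ≤ proj u (G k + C c * F m) ω :=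
    fun u k m h1 h2 => by rw [hJ, ← hz u]; exact add_le_add h1 h2
  have hlin : ∀ (a b : ℝ) (v w : ℂ) (p q : ℂ[X]), 0 ≤ a → 0 ≤ b → proj v p ω ≤ proj v q ω →
      proj w p ω ≤ proj w q ω → proj (a * v + b * w) p ω ≤ proj (a * v + b * w) q ω := by
    intro a b v w p q ha hb h1 h2
    rw [proj_lin, proj_lin]
    exact add_le_add (mul_le_mul_of_nonneg_left h1 ha) (mul_le_mul_of_nonneg_left h2 hb)
  have hFc : ∀ k, proj (conj c * (c * dir k)) f ω ≤ proj (conj c * (c * dir k)) (F k) ω := by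
    intro k
    rw [conj_mul_mul_dir]
    exact hlin _ _ _ _ _ _ hcn.le le_rfl (hf k) (hf k)
  have hFce : ∀ k ω, proj (conj c * (c * dir k)) (F k) ω
      = proj (conj c * (c * dir k)) (F (k + 1)) ω := by
    intro k ω
    rw [conj_mul_mul_dir, proj_lin, proj_lin, hFe]
  have hedgeG : ∀ k m ω, proj (dir k) (G k + C c * F m) ω
      = proj (dir k) (G (k + 1) + C c * F m) ω := by
    intro k m ω
    rw [proj_add, proj_add, hGe]
  have hedgeF : ∀ k m ω, proj (c * dir m) (G k + C c * F m) ω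
      = proj (c * dir m) (G k + C c * F (m + 1)) ω := by
    intro k m ω
    rw [proj_add, proj_add, proj_C_mul, proj_C_mul, hFce]
  -- The sign of `im c` decides how the edges of the two rectangles interleave: after the normal
  -- `dir k` comes `c * dir k` if `0 < im c`, and `c * dir (k + 1)` if `im c < 0`;
  -- for real `c` the two normals are parallel and the polygon is a rectangle.
  rcases lt_trichotomy c.im 0 with hb | hb | hb
  · refine not_forall_proj_nonneg_alternating (fun k => G k + C c * F (k + 1))
      (fun k => G (k + 1) + C c * F (k + 1)) dir (fun k => c * dir (k + 1))
      (fun k => hst _ _ (Or.inr (Or.inl rfl))) (fun k => hst _ _ (Or.inl rfl))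
      (fun k => hdeg _ _) (fun k => hdeg _ _) (fun k ω => hedgeG _ _ _) (fun k ω => hedgeF _ _ _)
      (fun k => ?_) (fun k => ?_) ?_ ω (fun k => ?_) (fun k => ?_)
    · have := conj_dir_mul 1 (c * I) k
      rw [one_mul, mul_assoc, ← dir_succ] at this
      rw [this]
      simpa using hc
    · have := conj_dir_mul c 1 (k + 1)
      rw [one_mul] at this
      rw [this]
      simpa using hb
    · obtain ⟨ω, h⟩ := hj (j - 1 + 1) (j - 1 + 1)
      refine ⟨j - 1, ω, ?_⟩
      rw [sub_add_cancel] at h ⊢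
      exact h
    · refine hge _ _ _ (hg k) ?_
      rw [conj_mul_dir_succ]
      exact hlin _ _ _ _ _ _ hc.le (by linarith) (hf' k) (hf _)
    · refine hge _ _ _ ?_ (hFc _)
      rw [mul_dir_pred]
      refine hlin _ _ _ _ _ _ hc.le (by linarith) (hg _) ?_
      rw [add_sub_cancel_right]
      exact hg' k
  · obtain ⟨e, he⟩ := exists_proj_neg (ι := ZMod 4)
      (fun k => G k + C c * F k) (fun k => G (k + 1) + C c * F (k + 1))
      (fun k => c * dir k) (fun k => k - 1) (fun k => k + 1)
      (fun k => hst _ _ (Or.inl rfl)) (fun k => hst _ _ (Or.inl rfl))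
      (fun k => hdeg _ _) (fun k => hdeg _ _) (fun k => sub_add_cancel k 1) (fun k => rfl)
      (by
        intro k ω
        rw [← hedgeF]
        have : c * dir k = (c.re : ℂ) * dir k + ((0 : ℝ) : ℂ) * dir k := by
          nth_rewrite 1 [← re_add_im c]
          rw [hb]; simp
        rw [this, proj_lin, proj_lin, hedgeG])
      (by
        intro k
        have := conj_dir_mul c (c * I) k
        rw [mul_assoc c I, ← dir_succ, ← mul_assoc (conj c), ← normSq_eq_conj_mul_self] at this
        rw [this]
        simpa using hcn)
      (by
        obtain ⟨ω, h⟩ := hj j j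
        exact ⟨j, ω, h⟩) ω
    refine absurd he (not_lt.2 (hge _ _ _ ?_ (hFc _)))
    rw [mul_dir_succ, hb]
    rw [proj_lin, proj_lin, zero_mul, zero_mul, add_zero, add_zero]
    exact mul_le_mul_of_nonneg_left (hg e) hc.le
  · refine not_forall_proj_nonneg_alternating (fun k => G k + C c * F k)
      (fun k => G (k + 1) + C c * F k) dir (fun k => c * dir k)
      (fun k => hst _ _ (Or.inl rfl)) (fun k => hst _ _ (Or.inr (Or.inr rfl)))
      (fun k => hdeg _ _) (fun k => hdeg _ _) (fun k ω => hedgeG _ _ _) (fun k ω => hedgeF _ _ _)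
      (fun k => ?_) (fun k => ?_) ?_ ω (fun k => ?_) (fun k => ?_)
    · have := conj_dir_mul 1 c k
      rw [one_mul] at this
      rw [this]
      simpa using hb
    · have := conj_dir_mul c I k
      rw [← dir_succ] at this
      rw [this]
      simpa using hc
    · obtain ⟨ω, h⟩ := hj (j + 1) j
      exact ⟨j, ω, h⟩
    · refine hge _ _ _ (hg k) ?_
      rw [conj_mul_dir_pred]
      refine hlin _ _ _ _ _ _ hc.le hb.le (hf k) ?_
      have := hf' (k - 1)
      rwa [sub_add_cancel] at this
    · refine hge _ _ _ ?_ (hFc _)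
      rw [mul_dir_succ]
      exact hlin _ _ _ _ _ _ hc.le hb.le (hg' k) (hg _)

/-! ### Kharitonov vertices -/

lemma khVertex_coeff {n k : ℕ} (hk : k ≤ n) (l u : ℕ → ℝ) (i j : ℕ) :
    (khVertex n l u i j).coeff k = khCoeff l u i j k := by
  rw [khVertex, finsetSum_coeff]
  simp only [coeff_C_mul_X_pow, Finset.sum_ite_eq]
  rw [if_pos (by simp; omega)]

lemma khVertex_natDegree_le (n : ℕ) (l u : ℕ → ℝ) (i j : ℕ) :
    (khVertex n l u i j).natDegree ≤ n := by
  refine natDegree_sum_le_of_forall_le _ _ fun k hk => ?_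
  exact (natDegree_C_mul_X_pow_le _ _).trans (by simp at hk; omega)

lemma khVertex_mem {n : ℕ} {l u : ℕ → ℝ} (h : ∀ i ≤ n, l i ≤ u i) (i j : ℕ) :
    khVertex n l u i j ∈ intervalFamily n l u := by
  refine ⟨khVertex_natDegree_le n l u i j, fun k hk => ?_⟩
  rw [khVertex_coeff hk]
  have := h k hk
  unfold khCoeff
  split_ifs <;> exact ⟨by linarith, by linarith⟩

/-- The Kharitonov vertex at the corner `q` of the value rectangle, numbered as in `vi`, viewed as
a complex polynomial. -/
def quadVertex (n : ℕ) (l u : ℕ → ℝ) (q : ZMod 4) : ℂ[X] :=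
  (khVertex n l u (vi q) (vj q)).map (algebraMap ℝ ℂ)

/-- On real polynomials, `proj v · ω` is linear in the coefficients with explicit weights, the
sign of `(conj v * I ^ k).re` being the sign of the `k`-th weight when `0 ≤ ω`. -/
lemma proj_map {f : ℝ[X]} {n : ℕ} (hf : f.natDegree ≤ n) (v : ℂ) (ω : ℝ) :
    proj v (f.map (algebraMap ℝ ℂ)) ω =
      ∑ k ∈ Finset.range (n + 1), f.coeff k * (conj v * I ^ k).re * ω ^ k := by
  unfold proj
  rw [eval_eq_sum_range' (Nat.lt_succ_of_le (natDegree_map_le.trans hf)), Finset.mul_sum, re_sum]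
  refine Finset.sum_congr rfl fun k _ => ?_
  rw [coeff_map, mul_pow, ← re_ofReal_mul, ← re_mul_ofReal]
  congr 1
  push_cast
  simp only [coe_algebraMap]
  ring

/-- The corners `q` and `q + 1` maximise the component along `dir q` coefficient by coefficient:
if the weight is nonzero, both carry the bound for the coefficient selected by its sign. -/
lemma khCoeff_extremal (l u : ℕ → ℝ) (q : ZMod 4) (k : ℕ) :
    khCoeff l u (vi q) (vj q) k * (conj (dir q) * I ^ k).re =
      khCoeff l u (vi (q + 1)) (vj (q + 1)) k * (conj (dir q) * I ^ k).re ∧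
    ∀ a ∈ Icc (l k) (u k), a * (conj (dir q) * I ^ k).re ≤
      khCoeff l u (vi q) (vj q) k * (conj (dir q) * I ^ k).re := by
  have hi : vi 0 = 2 ∧ vi 1 = 2 ∧ vi 2 = 1 ∧ vi 3 = 1 := ⟨rfl, rfl, rfl, rfl⟩
  have hj : vj 0 = 1 ∧ vj 1 = 2 ∧ vj 2 = 2 ∧ vj 3 = 1 := ⟨rfl, rfl, rfl, rfl⟩
  obtain ⟨i0, i1, i2, i3⟩ := hi
  obtain ⟨j0, j1, j2, j3⟩ := hj
  have s0 : (0 + 1 : ZMod 4) = 1 := rfl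
  have s1 : (1 + 1 : ZMod 4) = 2 := rfl
  have s2 : (2 + 1 : ZMod 4) = 3 := rfl
  have s3 : (3 + 1 : ZMod 4) = 0 := rfl
  -- Everything depends only on `k` modulo 4, which leaves sixteen cases.
  have hI : I ^ k = I ^ (k % 4) := by rw [Complex.I_pow_eq_pow_mod]
  have hk : k % 4 < 4 := Nat.mod_lt _ (by norm_num)
  have hk2 : k % 2 = (k % 4) % 2 := by omega
  have hk4 : k / 2 % 2 = (k % 4) / 2 := by omega
  unfold khCoeff
  rw [hI, hk2, hk4]
  have hI3 : I ^ 3 = -I := by rw [pow_succ, I_sq]; ring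
  generalize k % 4 = r at hk
  rcases zmod_four_cases q with rfl | rfl | rfl | rfl <;>
    interval_cases r <;>
      simp [s0, s1, s2, s3, i0, i1, i2, i3, j0, j1, j2, j3, dir_zero, dir_one, dir_two, dir_three,
        hI3] <;> intros <;> assumption

lemma proj_quadVertex_succ (n : ℕ) (l u : ℕ → ℝ) (q : ZMod 4) (ω : ℝ) :
    proj (dir q) (quadVertex n l u q) ω = proj (dir q) (quadVertex n l u (q + 1)) ω := by
  rw [quadVertex, quadVertex, proj_map (khVertex_natDegree_le n l u _ _),
    proj_map (khVertex_natDegree_le n l u _ _)]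
  refine Finset.sum_congr rfl fun k hk => ?_
  have hk' : k ≤ n := by simp at hk; omega
  rw [khVertex_coeff hk', khVertex_coeff hk', (khCoeff_extremal l u q k).1]

lemma proj_le_quadVertex {n : ℕ} {l u : ℕ → ℝ} {f : ℝ[X]} (hf : f ∈ intervalFamily n l u)
    (q : ZMod 4) {ω : ℝ} (hω : 0 ≤ ω) :
    proj (dir q) (f.map (algebraMap ℝ ℂ)) ω ≤ proj (dir q) (quadVertex n l u q) ω := by
  rw [quadVertex, proj_map (khVertex_natDegree_le n l u _ _), proj_map hf.1]
  refine Finset.sum_le_sum fun k hk => ?_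
  have hk' : k ≤ n := by simp at hk; omega
  rw [khVertex_coeff hk']
  exact mul_le_mul_of_nonneg_right ((khCoeff_extremal l u q k).2 _ (hf.2 k hk')) (by positivity)

/-! ### The combined family -/

/-- The complex polynomial `g + c f`. -/
def combo (c : ℂ) (g f : ℝ[X]) : ℂ[X] := g.map (algebraMap ℝ ℂ) + C c * f.map (algebraMap ℝ ℂ)

lemma combo_natDegree_le {m n : ℕ} (hmn : m < n) {g f : ℝ[X]} (hg : g.natDegree ≤ m)
    (hf : f.natDegree ≤ n) (c : ℂ) : (combo c g f).natDegree ≤ n :=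
  natDegree_add_le_of_degree_le ((natDegree_map_le.trans hg).trans hmn.le)
    ((natDegree_C_mul_le _ _).trans (natDegree_map_le.trans hf))

lemma combo_coeff {m n : ℕ} (hmn : m < n) {g f : ℝ[X]} (hg : g.natDegree ≤ m) (c : ℂ) :
    (combo c g f).coeff n = c * f.coeff n := by
  rw [combo, coeff_add, coeff_C_mul, coeff_map, coeff_map,
    coeff_eq_zero_of_natDegree_lt (hg.trans_lt hmn)]
  simp

lemma combo_conj_eval (c : ℂ) (g f : ℝ[X]) (z : ℂ) :
    (combo (conj c) g f).eval z = conj ((combo c g f).eval (conj z)) := by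
  simp [combo, eval_map_algebraMap, aeval_conj]

lemma stable_combo_conj {c : ℂ} {g f : ℝ[X]} (h : HurwitzStableC (combo c g f)) :
    HurwitzStableC (combo (conj c) g f) := by
  have hr : ∀ z, (combo (conj c) g f).IsRoot z → z.re < 0 := fun z hz => by
    rw [IsRoot, combo_conj_eval, map_eq_zero] at hz
    simpa using h.2 _ hz
  refine ⟨fun h0 => ?_, hr⟩
  have := hr 0 (by rw [h0]; simp)
  simp at this

/-- No member of the family has a root on the closed upper half of the imaginary axis. -/
lemma combo_eval_ne_zero {m n : ℕ} (hmn : m < n) {lb ub la ua : ℕ → ℝ}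
    (ha : ∀ i ≤ n, la i ≤ ua i) (han : 0 < la n) {c : ℂ} (hc : 0 < c.re)
    (hst : ∀ k q : ZMod 4, q = k ∨ q = k + 1 ∨ k = q + 1 →
      HurwitzStableC (combo c (khVertex m lb ub (vi k) (vj k)) (khVertex n la ua (vi q) (vj q))))
    {g f : ℝ[X]} (hg : g ∈ intervalFamily m lb ub) (hf : f ∈ intervalFamily n la ua) {ω : ℝ}
    (hω : 0 ≤ ω) : (combo c g f).eval (ω * I) ≠ 0 := by
  have hcn : 0 < normSq c := normSq_pos.2 fun h => by rw [h] at hc; simp at hc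
  have hco : ∀ k q, ∃ a : ℝ, 0 < a ∧ (quadVertex m lb ub k + C c * quadVertex n la ua q).coeff n
      = c * a := fun k q =>
    ⟨_, han.trans_le ((khVertex_mem ha (vi q) (vj q)).2 n le_rfl).1,
      combo_coeff hmn (khVertex_natDegree_le _ _ _ _ _) c⟩
  have hdeg : ∀ k q, (quadVertex m lb ub k + C c * quadVertex n la ua q).natDegree ≤ n :=
    fun k q => combo_natDegree_le hmn (khVertex_natDegree_le _ _ _ _ _)
      (khVertex_natDegree_le _ _ _ _ _) c
  -- The direction `c i ^ (n + 2)` is opposite to the leading term `c a (iω) ^ n` of every corner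
  -- as `ω → ∞`.
  refine eval_ne_zero_of_vertices (quadVertex m lb ub) (quadVertex n la ua) c hc _ _ ω
    (proj_quadVertex_succ _ _ _) (proj_quadVertex_succ _ _ _)
    (fun k => proj_le_quadVertex hg k hω) (fun k => proj_le_quadVertex hf k hω) hst ?_
    ⟨((n + 2 : ℕ) : ZMod 4), ?_⟩
  · intro k q
    obtain ⟨a, ha0, h⟩ := hco k q
    refine lt_of_lt_of_le (Nat.zero_lt_of_lt hmn) (le_natDegree_of_ne_zero ?_)
    rw [h]
    exact mul_ne_zero (normSq_pos.1 hcn) (by exact_mod_cast ha0.ne')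
  · intro k q
    obtain ⟨a, ha0, h⟩ := hco k q
    refine exists_proj_neg_of_coeff (Nat.zero_lt_of_lt hmn) (hdeg k q) ?_
    rw [h, ← dir_natCast]
    have : dir ((n + 2 : ℕ) : ZMod 4) = -1 * dir (n : ZMod 4) := by
      rw [dir_natCast, dir_natCast, pow_add, I_sq]; ring
    rw [this, ← mul_assoc c (-1), conj_dir_mul]
    have e : conj (c * -1) * (c * (a : ℂ)) = ((-(normSq c * a) : ℝ) : ℂ) := by
      rw [map_mul]; push_cast; rw [normSq_eq_conj_mul_self]; simp; ring
    rw [e, ofReal_re]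
    have := mul_pos hcn ha0
    linarith

lemma adjacent_mem_twelveTuples : ∀ k q : ZMod 4, q = k ∨ q = k + 1 ∨ k = q + 1 →
    (vi k, vj k, vi q, vj q) ∈ twelveTuples := by
  decide

lemma intervalFamily_segment {n : ℕ} {l u : ℕ → ℝ} {f₀ f₁ : ℝ[X]} (h₀ : f₀ ∈ intervalFamily n l u)
    (h₁ : f₁ ∈ intervalFamily n l u) {t : ℝ} (ht : t ∈ Icc (0 : ℝ) 1) :
    f₀ + C t * (f₁ - f₀) ∈ intervalFamily n l u := by
  refine ⟨natDegree_add_le_of_degree_le h₀.1 ((natDegree_C_mul_le _ _).trans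
    ((natDegree_sub_le _ _).trans (max_le h₁.1 h₀.1))), fun k hk => ?_⟩
  have := (convex_Icc (l k) (u k)).add_smul_sub_mem (h₀.2 k hk) (h₁.2 k hk) ht
  simpa using this

lemma combo_segment_eval (c : ℂ) (g₀ g f₀ f : ℝ[X]) (t : ℝ) (z : ℂ) :
    (combo c (g₀ + C t * (g - g₀)) (f₀ + C t * (f - f₀))).eval z =
      (combo c g₀ f₀).eval z + t * ((combo c g f).eval z - (combo c g₀ f₀).eval z) := by
  simp only [combo, Polynomial.map_add, Polynomial.map_mul, Polynomial.map_sub, map_C, eval_add,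
    eval_mul, eval_sub, eval_C, coe_algebraMap]
  ring

/-- Stability of the twelve vertices gives stability of the whole family, for an arbitrary
multiplier `c` with positive real part. -/
lemma stable_combo {m n : ℕ} (hmn : m < n) {lb ub la ua : ℕ → ℝ}
    (hb : ∀ i ≤ m, lb i ≤ ub i) (ha : ∀ i ≤ n, la i ≤ ua i) (han : 0 < la n) {c : ℂ}
    (hc : 0 < c.re)
    (hst : ∀ k q : ZMod 4, q = k ∨ q = k + 1 ∨ k = q + 1 →
      HurwitzStableC (combo c (khVertex m lb ub (vi k) (vj k)) (khVertex n la ua (vi q) (vj q))))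
    {g f : ℝ[X]} (hg : g ∈ intervalFamily m lb ub) (hf : f ∈ intervalFamily n la ua) :
    HurwitzStableC (combo c g f) := by
  have haxis : ∀ g ∈ intervalFamily m lb ub, ∀ f ∈ intervalFamily n la ua, ∀ z : ℂ, z.re = 0 →
      (combo c g f).eval z ≠ 0 := by
    intro g hg f hf z hz
    have hzI : z = z.im * I := by apply Complex.ext <;> simp [hz]
    rcases le_total 0 z.im with h0 | h0
    · rw [hzI]
      exact combo_eval_ne_zero hmn ha han hc hst hg hf h0
    -- Below the real axis: conjugate, which replaces `c` by its conjugate.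
    · have hne := combo_eval_ne_zero hmn ha han (c := conj c) (by simpa using hc)
        (fun k q hkq => stable_combo_conj (hst k q hkq)) hg hf (neg_nonneg.2 h0)
      rw [combo_conj_eval] at hne
      intro hz0
      apply hne
      rw [map_eq_zero, ← hz0, hzI]
      simp
  have hg₀ := khVertex_mem hb (vi 0) (vj 0)
  have hf₀ := khVertex_mem ha (vi 0) (vj 0)
  have hc0 : c ≠ 0 := fun h0 => by rw [h0] at hc; simp at hc
  refine stable_of_segment (combo_natDegree_le hmn hg₀.1 hf₀.1 c)
    (combo_natDegree_le hmn hg.1 hf.1 c) hc0 (han.trans_le (hf₀.2 n le_rfl).1)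
    (han.trans_le (hf.2 n le_rfl).1) (combo_coeff hmn hg₀.1 c) (combo_coeff hmn hg.1 c)
    (hst 0 0 (Or.inl rfl)) fun t ht z hz => ?_
  have := haxis _ (intervalFamily_segment hg₀ hg ht) _ (intervalFamily_segment hf₀ hf ht) z hz
  rw [combo_segment_eval] at this
  exact this

/-- **Lemma 2.4.** For `δ ∈ (0,1)` and `θ ∈ [-π, π]`, every member of the
complex polynomial family `W(s) = { g(s) + (1 + δe^{iθ}) f(s) : g ∈ K_g, f ∈ K_f }`
is Hurwitz stable iff the twelve critical vertex polynomials
`J_{i₁j₁i₂j₂}(s) = g_{i₁j₁}(s) + (1 + δe^{iθ}) f_{i₂j₂}(s)` are Hurwitz stable. -/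
theorem family_hurwitz_iff_twelve_vertices_hurwitz
    (m n : ℕ) (hmn : m < n)
    (lb ub : ℕ → ℝ) (la ua : ℕ → ℝ)
    (hb : ∀ i ≤ m, lb i ≤ ub i)
    (ha : ∀ i ≤ n, la i ≤ ua i)
    (han : 0 < la n)
    (δ : ℝ) (hδ : δ ∈ Set.Ioo (0 : ℝ) 1) (θ : ℝ) (hθ : θ ∈ Set.Icc (-π) π) :
    (∀ g ∈ intervalFamily m lb ub, ∀ f ∈ intervalFamily n la ua,
      HurwitzStableC
        (g.map (algebraMap ℝ ℂ) +
          Polynomial.C (1 + (δ : ℂ) * Complex.exp (θ * Complex.I)) *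
            f.map (algebraMap ℝ ℂ))) ↔
    (∀ v ∈ twelveTuples,
      HurwitzStableC
        ((khVertex m lb ub v.1 v.2.1).map (algebraMap ℝ ℂ) +
          Polynomial.C (1 + (δ : ℂ) * Complex.exp (θ * Complex.I)) *
            (khVertex n la ua v.2.2.1 v.2.2.2).map (algebraMap ℝ ℂ))) := by
  refine ⟨fun h v _ => h _ (khVertex_mem hb v.1 v.2.1) _ (khVertex_mem ha v.2.2.1 v.2.2.2),
    fun h g hg f hf => ?_⟩
  have hc : 0 < (1 + (δ : ℂ) * Complex.exp (θ * Complex.I)).re := by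
    rw [add_re, one_re, re_ofReal_mul, exp_ofReal_mul_I_re]
    nlinarith [hδ.1, hδ.2, Real.neg_one_le_cos θ]
  have hst : ∀ k q : ZMod 4, q = k ∨ q = k + 1 ∨ k = q + 1 → HurwitzStableC
      (combo (1 + (δ : ℂ) * Complex.exp (θ * Complex.I)) (khVertex m lb ub (vi k) (vj k))
        (khVertex n la ua (vi q) (vj q))) :=
    fun k q hkq => h (vi k, vj k, vi q, vj q) (adjacent_mem_twelveTuples k q hkq)
  exact stable_combo hmn hb ha han hc hst hg hf
end
end

section
/- Let K_f be the interval polynomial family of degree n with bounds a̲_i ≤ a̅_i (i = 0,…,n). For f(s) = Σ_{i=0}^n a_i s^i ∈ K_f (with a_i ∈ [a̲_i, a̅_i]), write f(s) = α_f(s²) + s β_f(s²), where α_f(s²) = a₀ + a₂s² + a₄s⁴ + … and β_f(s²) = a₁ + a₃s² + a₅s⁴ + …. Then for every ω ∈ ℝ: α^{(1)}(−ω²) ≤ α_f(−ω²) ≤ α^{(2)}(−ω²) and β^{(1)}(−ω²) ≤ β_f(−ω²) ≤ β^{(2)}(−ω²). Equivalently, for every ω ∈ ℝ, the real part of f(iω)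 lies between α^{(1)}(−ω²) and α^{(2)}(−ω²), and the imaginary part of f(iω) equals ω β_f(−ω²) with β_f(−ω²) between β^{(1)}(−ω²) and β^{(2)}(−ω²). -/
/-!
Since `(iω)² = -ω²` is real, splitting `f(iω)` by the parity of the exponent gives
`f(iω) = α_f(-ω²) + iω β_f(-ω²)` with both sums real (`sum_range_parity`).
In either sum `(-ω²)ᵐ` is nonnegative for even `m` and nonpositive for odd `m`, so the `m`-th term
is smallest at the lower bound of its coefficient when `m` is even and at the upper bound when `m`
is odd, and largest at the opposite choice. The vertices with index `1` and `2` make exactly these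
choices, so the bounds hold term by term (`term_bounds`).
-/

open Polynomial Complex Set

noncomputable section

/-- `α⁽ⁱ⁾(-ω²)`: the even part of the Kharitonov vertex with index `i`,
evaluated at `s² = -ω²`. -/
def khAlpha (n : ℕ) (l u : ℕ → ℝ) (i : ℕ) (ω : ℝ) : ℝ :=
  ∑ m ∈ Finset.range (n / 2 + 1), khCoeff l u i 1 (2 * m) * (-(ω ^ 2)) ^ m

/-- `β⁽ʲ⁾(-ω²)`: the odd part of the Kharitonov vertex with index `j`,
evaluated at `s² = -ω²`. -/
def khBeta (n : ℕ) (l u : ℕ → ℝ) (j : ℕ) (ω : ℝ) : ℝ :=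
  ∑ m ∈ Finset.range ((n + 1) / 2), khCoeff l u 1 j (2 * m + 1) * (-(ω ^ 2)) ^ m

/-- Splitting of a sum over `0, …, n` into its even and odd indices. -/
theorem sum_range_parity {M : Type*} [AddCommMonoid M] (g : ℕ → M) (n : ℕ) :
    ∑ k ∈ Finset.range (n + 1), g k =
      ∑ m ∈ Finset.range (n / 2 + 1), g (2 * m) +
        ∑ m ∈ Finset.range ((n + 1) / 2), g (2 * m + 1) := by
  induction n with
  | zero => simp
  | succ n ih =>
    rw [Finset.sum_range_succ, ih]
    rcases Nat.even_or_odd' n with ⟨c, rfl | rfl⟩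
    · rw [show (2 * c + 1) / 2 = c by omega, show 2 * c / 2 = c by omega,
        show (2 * c + 1 + 1) / 2 = c + 1 by omega, Finset.sum_range_succ (fun m => g (2 * m + 1)),
        add_assoc]
    · rw [show (2 * c + 1) / 2 = c by omega, show (2 * c + 1 + 1) / 2 = c + 1 by omega,
        show (2 * c + 1 + 1 + 1) / 2 = c + 1 by omega,
        Finset.sum_range_succ (fun m => g (2 * m)) (c + 1),
        show 2 * (c + 1) = 2 * c + 1 + 1 by ring]
      exact add_right_comm _ _ _

/-- Multiplication by `(-ω²)ᵐ` preserves the order for even `m` and reverses it for odd `m`. -/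
theorem term_bounds {x lo hi : ℝ} (hlo : lo ≤ x) (hhi : x ≤ hi) (ω : ℝ) (m : ℕ) :
    (if m % 2 = 0 then lo else hi) * (-(ω ^ 2)) ^ m ≤ x * (-(ω ^ 2)) ^ m ∧
      x * (-(ω ^ 2)) ^ m ≤ (if m % 2 = 0 then hi else lo) * (-(ω ^ 2)) ^ m := by
  rcases Nat.even_or_odd m with h | h
  · have hp : 0 ≤ (-(ω ^ 2)) ^ m := h.pow_nonneg _
    rw [if_pos (Nat.even_iff.mp h), if_pos (Nat.even_iff.mp h)]
    exact ⟨mul_le_mul_of_nonneg_right hlo hp, mul_le_mul_of_nonneg_right hhi hp⟩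
  · have hp : (-(ω ^ 2)) ^ m ≤ 0 := h.pow_nonpos (neg_nonpos.mpr (sq_nonneg ω))
    have hm : ¬ m % 2 = 0 := by rw [Nat.odd_iff.mp h]; decide
    rw [if_neg hm, if_neg hm]
    exact ⟨mul_le_mul_of_nonpos_right hhi hp, mul_le_mul_of_nonpos_right hlo hp⟩

theorem khCoeff_even (l u : ℕ → ℝ) (i j m : ℕ) :
    khCoeff l u i j (2 * m) =
      if m % 2 = 0 then (if i = 1 then l (2 * m) else u (2 * m))
      else (if i = 1 then u (2 * m) else l (2 * m)) := by
  rw [khCoeff, if_pos (by omega), show 2 * m / 2 = m by omega]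

theorem khCoeff_odd (l u : ℕ → ℝ) (i j m : ℕ) :
    khCoeff l u i j (2 * m + 1) =
      if m % 2 = 0 then (if j = 1 then l (2 * m + 1) else u (2 * m + 1))
      else (if j = 1 then u (2 * m + 1) else l (2 * m + 1)) := by
  rw [khCoeff, if_neg (by omega), show (2 * m + 1) / 2 = m by omega]

/-- **Lemma 2.1.** For any `f ∈ K_f`, decomposed as `f(s) = α_f(s²) + s β_f(s²)`,
and any `ω ∈ ℝ`, one has `α⁽¹⁾(-ω²) ≤ α_f(-ω²) ≤ α⁽²⁾(-ω²)` and
`β⁽¹⁾(-ω²) ≤ β_f(-ω²) ≤ β⁽²⁾(-ω²)`; moreover `Re f(iω) = α_f(-ω²)` and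
`Im f(iω) = ω β_f(-ω²)`. -/
theorem kharitonov_rectangle_bounds
    (n : ℕ) (l u : ℕ → ℝ) (hlu : ∀ k ≤ n, l k ≤ u k)
    (a : ℕ → ℝ) (ha : ∀ k ≤ n, a k ∈ Set.Icc (l k) (u k))
    (f : Polynomial ℝ)
    (hf : f = ∑ k ∈ Finset.range (n + 1), Polynomial.C (a k) * Polynomial.X ^ k)
    (ω : ℝ) :
    (Polynomial.aeval ((ω : ℂ) * Complex.I) f).re =
        ∑ m ∈ Finset.range (n / 2 + 1), a (2 * m) * (-(ω ^ 2)) ^ m ∧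
    (Polynomial.aeval ((ω : ℂ) * Complex.I) f).im =
        ω * ∑ m ∈ Finset.range ((n + 1) / 2), a (2 * m + 1) * (-(ω ^ 2)) ^ m ∧
    khAlpha n l u 1 ω ≤ ∑ m ∈ Finset.range (n / 2 + 1), a (2 * m) * (-(ω ^ 2)) ^ m ∧
    (∑ m ∈ Finset.range (n / 2 + 1), a (2 * m) * (-(ω ^ 2)) ^ m) ≤ khAlpha n l u 2 ω ∧
    khBeta n l u 1 ω ≤ ∑ m ∈ Finset.range ((n + 1) / 2), a (2 * m + 1) * (-(ω ^ 2)) ^ m ∧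
    (∑ m ∈ Finset.range ((n + 1) / 2), a (2 * m + 1) * (-(ω ^ 2)) ^ m) ≤ khBeta n l u 2 ω := by
  have hsq : ((ω : ℂ) * Complex.I) ^ 2 = ((-(ω ^ 2) : ℝ) : ℂ) := by
    rw [mul_pow, Complex.I_sq]
    push_cast
    ring
  have key : Polynomial.aeval ((ω : ℂ) * Complex.I) f =
      ((∑ m ∈ Finset.range (n / 2 + 1), a (2 * m) * (-(ω ^ 2)) ^ m : ℝ) : ℂ) +
      ((ω * ∑ m ∈ Finset.range ((n + 1) / 2), a (2 * m + 1) * (-(ω ^ 2)) ^ m : ℝ) : ℂ) *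
        Complex.I := by
    rw [hf, sum_range_parity, map_add, map_sum, map_sum, Complex.ofReal_sum, Complex.ofReal_mul,
      Complex.ofReal_sum, mul_right_comm, Finset.mul_sum]
    congr 1 <;> refine Finset.sum_congr rfl fun m _ => ?_
    · rw [map_mul, map_pow, Polynomial.aeval_X, Polynomial.aeval_C, pow_mul, hsq,
        Complex.ofReal_mul, Complex.ofReal_pow]
      rfl
    · rw [map_mul, map_pow, Polynomial.aeval_X, Polynomial.aeval_C, pow_succ, pow_mul, hsq,
        Complex.ofReal_mul, Complex.ofReal_pow, Complex.coe_algebraMap]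
      ring
  have hE : ∀ m ∈ Finset.range (n / 2 + 1), 2 * m ≤ n := fun m hm => by
    have := Finset.mem_range.mp hm
    omega
  have hO : ∀ m ∈ Finset.range ((n + 1) / 2), 2 * m + 1 ≤ n := fun m hm => by
    have := Finset.mem_range.mp hm
    omega
  refine ⟨?_, ?_, Finset.sum_le_sum fun m hm => ?_, Finset.sum_le_sum fun m hm => ?_,
    Finset.sum_le_sum fun m hm => ?_, Finset.sum_le_sum fun m hm => ?_⟩
  · rw [key, ← Complex.mk_eq_add_mul_I]
  · rw [key, ← Complex.mk_eq_add_mul_I]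
  · simpa [khCoeff_even] using (term_bounds (ha _ (hE m hm)).1 (ha _ (hE m hm)).2 ω m).1
  · simpa [khCoeff_even] using (term_bounds (ha _ (hE m hm)).1 (ha _ (hE m hm)).2 ω m).2
  · simpa [khCoeff_odd] using (term_bounds (ha _ (hO m hm)).1 (ha _ (hO m hm)).2 ω m).1
  · simpa [khCoeff_odd] using (term_bounds (ha _ (hO m hm)).1 (ha _ (hO m hm)).2 ω m).2
end
end

section
/- (Zero Exclusion Principle) Let T be a compact connected topological space and let n ≥ 1. Suppose f(s,t) = Σ_{i=0}^n c_i(t) s^i is a family of complex polynomials whose coefficients c_i : T → ℂ are continuous and whose leading coefficient satisfies c_n(t) ≠ 0 for all t ∈ T. Then f(·,t) is Hurwitz stable for every t ∈ T if and only if: (1) there exists t* ∈ T such that f(·,t*) is Hurwitz stable; and (2) f(iω, t) ≠ 0 for all ω ∈ ℝ and all t ∈ T. -/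
/-!
The Hurwitz stable parameters form a nonempty clopen subset of the connected space `T`. Once no root
lies on the imaginary axis, `t` is unstable exactly when some root has nonnegative (equivalently,
positive) real part.

* The unstable set is closed: Cauchy's bound and compactness of `T` confine all roots to one closed
  disc `D`, so this set is the projection to `T` of a closed subset of `T × D`, and projecting along
  the compact `D` is a closed map (`isClosed_exists_root_re_nonneg`).
* It is open: if `f(z₀, t₀) = 0` with `0 < re z₀`, and all roots of `f(·, t)` stay at distance at
  least `re z₀` from `z₀`, then the factorization into linear factors gives
  `‖c n t‖ * (re z₀) ^ n ≤ ‖f(z₀, t)‖`. This fails at `t₀`, hence near `t₀`, so `f(·, t)` has a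
  root within distance less than `re z₀` of `z₀`, that is, in the open right half plane
  (`isOpen_exists_root_re_pos`).
-/

open Polynomial Complex Set

noncomputable section

/-- The polynomial `f(·, t)` of the family. -/
def family {T : Type*} (n : ℕ) (c : ℕ → T → ℂ) (t : T) : Polynomial ℂ :=
  ∑ i ∈ Finset.range (n + 1), Polynomial.C (c i t) * Polynomial.X ^ i

section Family

variable {T : Type*} {n : ℕ} {c : ℕ → T → ℂ}

lemma family_coeff (t : T) (j : ℕ) (hj : j ≤ n) : (family n c t).coeff j = c j t := by
  simp only [family, Polynomial.finsetSum_coeff, Polynomial.coeff_C_mul_X_pow]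
  rw [Finset.sum_ite_eq, if_pos (Finset.mem_range.2 (by omega))]

lemma family_ne_zero (hlead : ∀ t, c n t ≠ 0) (t : T) : family n c t ≠ 0 := by
  intro h
  apply hlead t
  rw [← family_coeff (c := c) t n le_rfl, h, Polynomial.coeff_zero]

lemma family_natDegree (hlead : ∀ t, c n t ≠ 0) (t : T) : (family n c t).natDegree = n := by
  apply le_antisymm
  · refine Polynomial.natDegree_sum_le_of_forall_le _ _ fun i hi => ?_
    exact (Polynomial.natDegree_C_mul_X_pow_le _ _).trans
      (Nat.lt_succ_iff.1 (Finset.mem_range.1 hi))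
  · exact Polynomial.le_natDegree_of_ne_zero (by rw [family_coeff t n le_rfl]; exact hlead t)

lemma family_leadingCoeff (hlead : ∀ t, c n t ≠ 0) (t : T) :
    (family n c t).leadingCoeff = c n t := by
  rw [Polynomial.leadingCoeff, family_natDegree hlead, family_coeff t n le_rfl]

lemma family_eval (t : T) (z : ℂ) :
    (family n c t).eval z = ∑ i ∈ Finset.range (n + 1), c i t * z ^ i := by
  simp [family, Polynomial.eval_finsetSum]

lemma hurwitzStableC_family_iff (hlead : ∀ t, c n t ≠ 0) (t : T) :
    HurwitzStableC (family n c t) ↔ ∀ z, (family n c t).eval z = 0 → z.re < 0 :=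
  and_iff_right (family_ne_zero hlead t)

variable [TopologicalSpace T]

lemma continuous_family_eval (hc : ∀ i ≤ n, Continuous (c i)) :
    Continuous fun q : T × ℂ => (family n c q.1).eval q.2 := by
  simp only [family_eval]
  refine continuous_finsetSum _ fun i hi => ?_
  exact ((hc i (Nat.lt_succ_iff.1 (Finset.mem_range.1 hi))).comp continuous_fst).mul
    (continuous_snd.pow i)

/-- All roots of all members of the family lie in one disc. -/
lemma exists_root_bound [CompactSpace T] (hc : ∀ i ≤ n, Continuous (c i))
    (hlead : ∀ t, c n t ≠ 0) :
    ∃ R : ℝ, ∀ t z, (family n c t).eval z = 0 → ‖z‖ ≤ R := by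
  have hcont : Continuous fun t =>
      (Finset.range n).sup (fun i => ‖c i t‖₊) / ‖c n t‖₊ + 1 := by
    refine Continuous.add (Continuous.div₀ ?_ (hc n le_rfl).nnnorm fun t => by
      simpa using hlead t) continuous_const
    exact Continuous.finset_sup_apply fun i hi =>
      (hc i (Finset.mem_range.1 hi).le).nnnorm
  obtain ⟨R, hR⟩ := (isCompact_range hcont).bddAbove
  refine ⟨R, fun t z hz => ?_⟩
  have h1 := Polynomial.IsRoot.norm_lt_cauchyBound (family_ne_zero hlead t) hz
  have h2 : (family n c t).cauchyBound =
      (Finset.range n).sup (fun i => ‖c i t‖₊) / ‖c n t‖₊ + 1 := by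
    rw [Polynomial.cauchyBound, family_natDegree hlead, family_leadingCoeff hlead]
    congr 2
    refine Finset.sup_congr rfl fun i hi => ?_
    rw [family_coeff t i (Finset.mem_range.1 hi).le]
  rw [h2] at h1
  exact_mod_cast h1.le.trans (hR ⟨t, rfl⟩)

lemma isClosed_exists_root_re_nonneg [CompactSpace T] (hc : ∀ i ≤ n, Continuous (c i))
    (hlead : ∀ t, c n t ≠ 0) :
    IsClosed {t | ∃ z, (family n c t).eval z = 0 ∧ 0 ≤ z.re} := by
  obtain ⟨R, hR⟩ := exists_root_bound hc hlead
  have hcl : IsClosed {q : T × Metric.closedBall (0 : ℂ) R |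
      (family n c q.1).eval (q.2 : ℂ) = 0 ∧ 0 ≤ (q.2 : ℂ).re} := by
    refine IsClosed.inter ?_ ?_
    · exact isClosed_eq ((continuous_family_eval hc).comp
        (continuous_fst.prodMk (continuous_subtype_val.comp continuous_snd))) continuous_const
    · exact isClosed_le continuous_const
        (Complex.continuous_re.comp (continuous_subtype_val.comp continuous_snd))
  have : CompactSpace (Metric.closedBall (0 : ℂ) R) :=
    isCompact_iff_compactSpace.1 (isCompact_closedBall 0 R)
  convert! isClosedMap_fst_of_compactSpace _ hcl using 1
  ext t
  constructor
  · rintro ⟨z, hz, hre⟩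
    exact ⟨(t, ⟨z, by simpa using hR t z hz⟩), ⟨hz, hre⟩, rfl⟩
  · rintro ⟨⟨s, z⟩, ⟨hz, hre⟩, rfl⟩
    exact ⟨z, hz, hre⟩

/-- A polynomial is bounded below at a point far from all of its roots. -/
lemma leadingCoeff_mul_pow_le_norm_eval (p : Polynomial ℂ) (z : ℂ) {r : ℝ} (hr : 0 ≤ r)
    (h : ∀ w ∈ p.roots, r ≤ ‖z - w‖) :
    ‖p.leadingCoeff‖ * r ^ p.natDegree ≤ ‖p.eval z‖ := by
  have hs : p.Splits := IsAlgClosed.splits p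
  rw [hs.eval_eq_prod_roots, hs.natDegree_eq_card_roots, norm_mul]
  refine mul_le_mul_of_nonneg_left ?_ (norm_nonneg _)
  have h1 := Multiset.prod_map_le_prod_map₀ (s := p.roots) (fun _ => r) (fun w => ‖z - w‖)
    (fun _ _ => hr) h
  have h2 : ‖(p.roots.map (fun w => z - w)).prod‖ = (p.roots.map (fun w => ‖z - w‖)).prod := by
    simpa [Multiset.map_map] using
      map_multiset_prod (normHom : ℂ →*₀ ℝ) (p.roots.map (fun w => z - w))
  rw [h2]
  simpa using h1

lemma isOpen_exists_root_re_pos (hc : ∀ i ≤ n, Continuous (c i)) (hlead : ∀ t, c n t ≠ 0) :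
    IsOpen {t | ∃ z, (family n c t).eval z = 0 ∧ 0 < z.re} := by
  rw [isOpen_iff_mem_nhds]
  rintro t₀ ⟨z₀, hz₀, hre⟩
  have hopen : IsOpen {t | ‖(family n c t).eval z₀‖ < ‖c n t‖ * z₀.re ^ n} :=
    isOpen_lt ((continuous_family_eval hc).comp (continuous_id.prodMk continuous_const)).norm
      ((hc n le_rfl).norm.mul continuous_const)
  have hmem : t₀ ∈ {t | ‖(family n c t).eval z₀‖ < ‖c n t‖ * z₀.re ^ n} := by
    have := norm_pos_iff.2 (hlead t₀)
    simp only [mem_ofPred_eq, hz₀, norm_zero]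
    positivity
  filter_upwards [hopen.mem_nhds hmem] with t ht
  by_contra hno
  refine absurd ht (not_lt.2 ?_)
  have := leadingCoeff_mul_pow_le_norm_eval (family n c t) z₀ hre.le fun w hw => by
    have hw0 : w.re ≤ 0 := not_lt.1 fun hpos => hno ⟨w, (Polynomial.mem_roots'.1 hw).2, hpos⟩
    calc z₀.re ≤ (z₀ - w).re := by rw [Complex.sub_re]; linarith
      _ ≤ ‖z₀ - w‖ := Complex.re_le_norm _
  rwa [family_leadingCoeff hlead, family_natDegree hlead] at this

end Family

/-- **Lemma 2.2 (Zero Exclusion Principle).** Let `T` be a nonempty compact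
connected space and `f(s,t) = Σ_{i=0}^n c_i(t) sⁱ` a family of degree-`n`
complex polynomials with continuous coefficients and nonvanishing leading
coefficient. Then every member is Hurwitz stable iff some member is Hurwitz
stable and `f(iω, t) ≠ 0` for all `ω ∈ ℝ` and `t ∈ T`. -/
theorem zero_exclusion_principle
    (T : Type*) [TopologicalSpace T] [CompactSpace T] [ConnectedSpace T] [Nonempty T]
    (n : ℕ) (hn : 1 ≤ n)
    (c : ℕ → T → ℂ) (hc : ∀ i ≤ n, Continuous (c i))
    (hlead : ∀ t : T, c n t ≠ 0) :
    (∀ t : T,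
        HurwitzStableC (∑ i ∈ Finset.range (n + 1), Polynomial.C (c i t) * Polynomial.X ^ i)) ↔
      ((∃ tstar : T,
          HurwitzStableC
            (∑ i ∈ Finset.range (n + 1), Polynomial.C (c i tstar) * Polynomial.X ^ i)) ∧
        ∀ (ω : ℝ) (t : T),
          Polynomial.eval ((ω : ℂ) * Complex.I)
              (∑ i ∈ Finset.range (n + 1), Polynomial.C (c i t) * Polynomial.X ^ i) ≠ 0) := by
  change (∀ t, HurwitzStableC (family n c t)) ↔
    ((∃ t, HurwitzStableC (family n c t)) ∧
      ∀ (ω : ℝ) (t : T), (family n c t).eval ((ω : ℂ) * Complex.I) ≠ 0)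
  constructor
  · intro h
    refine ⟨⟨Classical.arbitrary T, h _⟩, fun ω t h0 => ?_⟩
    simpa using (h t).2 _ h0
  · rintro ⟨⟨t₀, ht₀⟩, haxis⟩
    have hset : {t | ∃ z, (family n c t).eval z = 0 ∧ 0 ≤ z.re} =
        {t | ∃ z, (family n c t).eval z = 0 ∧ 0 < z.re} := by
      ext t
      refine exists_congr fun z => and_congr_right fun hz => ⟨fun h => ?_, le_of_lt⟩
      refine lt_of_le_of_ne h fun hre => haxis z.im t ?_
      have : (z.im : ℂ) * Complex.I = z := by
        apply Complex.ext <;> simp [← hre]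
      rwa [this]
    have hclopen : IsClopen {t | ∃ z, (family n c t).eval z = 0 ∧ 0 ≤ z.re} :=
      ⟨isClosed_exists_root_re_nonneg hc hlead, hset ▸ isOpen_exists_root_re_pos hc hlead⟩
    intro t
    rw [hurwitzStableC_family_iff hlead] at ht₀ ⊢
    rcases isClopen_iff.1 hclopen with h | h
    · intro z hz
      by_contra hre
      have : t ∈ (∅ : Set T) := h ▸ ⟨z, hz, not_lt.1 hre⟩
      exact this
    · have : t₀ ∈ {t | ∃ z, (family n c t).eval z = 0 ∧ 0 ≤ z.re} := h ▸ mem_univ t₀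
      obtain ⟨z, hz, hre⟩ := this
      exact absurd (ht₀ z hz) (not_lt.2 hre)
end
end

section
/- Let p be a complex polynomial of degree at least 1 that is Hurwitz stable. Then for every s ∈ ℂ with Re(s) ≥ 0, one has p(s) ≠ 0 and Re(p'(s)/p(s)) > 0, where p' is the derivative of p. In particular, for every ω ∈ ℝ, the derivative of the argument of p(iω) with respect to ω, which equals Re(p'(iω)/p(iω)), is strictly positive. -/
/-! Over `ℂ` the polynomial splits, so away from its roots `p'(s) / p(s) = ∑ 1 / (s - z)`, the sum
running over the roots `z` with multiplicity. If `0 ≤ Re s` and `Re z < 0`, then `Re (s - z) > 0`,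
hence `Re (1 / (s - z)) > 0`; the sum is nonempty because `p` is nonconstant. -/

open Polynomial Complex Set

noncomputable section

lemma multiset_sum_re_pos {m : Multiset ℂ} (hm : m ≠ 0) (h : ∀ x ∈ m, 0 < x.re) :
    0 < m.sum.re := by
  refine m.sum_induction_nonempty (fun x => 0 < x.re) (fun a b ha hb => ?_) hm h
  simpa using add_pos ha hb

/-- For a Hurwitz stable complex polynomial `p` of degree at least `1`, at every
point `s` of the closed right half plane one has `p(s) ≠ 0` and
`Re (p'(s)/p(s)) > 0`; in particular the derivative of the argument of `p(iω)`
with respect to `ω`, namely `Re (p'(iω)/p(iω))`, is strictly positive. -/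
theorem hurwitz_arg_increasing
    (p : Polynomial ℂ) (hdeg : 1 ≤ p.degree) (hp : HurwitzStableC p) :
    (∀ s : ℂ, 0 ≤ s.re →
      Polynomial.eval s p ≠ 0 ∧
        0 < (Polynomial.eval s (Polynomial.derivative p) / Polynomial.eval s p).re) ∧
    (∀ ω : ℝ,
      0 < (Polynomial.eval ((ω : ℂ) * Complex.I) (Polynomial.derivative p) /
            Polynomial.eval ((ω : ℂ) * Complex.I) p).re) := by
  have key : ∀ s : ℂ, 0 ≤ s.re →
      Polynomial.eval s p ≠ 0 ∧
        0 < (Polynomial.eval s (Polynomial.derivative p) / Polynomial.eval s p).re := by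
    intro s hs
    have h0 : Polynomial.eval s p ≠ 0 := fun h => absurd (hp.2 s h) (not_lt.mpr hs)
    refine ⟨h0, ?_⟩
    rw [(IsAlgClosed.splits p).eval_derivative_div_eval_of_ne_zero h0]
    apply multiset_sum_re_pos
    · have hr : p.roots ≠ 0 := by
        obtain ⟨z, hz⟩ := IsAlgClosed.exists_root p (zero_lt_one.trans_le hdeg).ne'
        exact fun h => by simpa [h] using (mem_roots hp.1).mpr hz
      simpa using hr
    · intro x hx
      obtain ⟨z, hz, rfl⟩ := Multiset.mem_map.mp hx
      have hpos : 0 < (s - z).re := by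
        have := hp.2 z (isRoot_of_mem_roots hz)
        rw [sub_re]
        linarith
      have hne : s - z ≠ 0 := fun h => by simp [h] at hpos
      rw [one_div, inv_re]
      exact div_pos hpos (normSq_pos.mpr hne)
  exact ⟨key, fun ω => (key _ (by simp)).2⟩
end
end

section
/- Let p and q be complex polynomials, each Hurwitz stable and of degree at least 1, and suppose there exist λ ∈ (0,1) and ω₀ ∈ ℝ such that λ p(iω₀) + (1−λ) q(iω₀) = 0. Then q(iω₀) − p(iω₀) ≠ 0 and (q'(iω₀) − p'(iω₀))/(q(iω₀) − p(iω₀)) = (1−λ)·p'(iω₀)/p(iω₀) + λ·q'(iω₀)/q(iω₀); in particular Re((q'(iω₀) − p'(iω₀))/(q(iω₀) − p(iω₀))) > 0, i.e. the derivative of the argument of (q − p)(iω) at ω = ω₀ is strictly positive. -/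
/-!
The zero condition gives `(q - p)(iω₀) = q(iω₀) / λ = -p(iω₀) / (1 - λ)`, so the logarithmic
derivative of `q - p` at `iω₀` is the convex combination of those of `p` and `q` with swapped
weights. The logarithmic derivative of a Hurwitz stable polynomial is `∑ 1 / (z - r)` over its
roots `r`; at `z` on the imaginary axis each `z - r` has positive real part, hence so does each
summand, and the sum is nonempty when the degree is positive.
-/

open Polynomial Complex Set

noncomputable section

/-- The logarithmic derivative of a nonconstant Hurwitz stable polynomial has positive real part
on the closed right half-plane. -/
theorem HurwitzStableC.re_derivative_div_pos {p : Polynomial ℂ} (hp : HurwitzStableC p)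
    (hd : 1 ≤ p.degree) {z : ℂ} (hz : 0 ≤ z.re) :
    0 < (Polynomial.eval z (Polynomial.derivative p) / Polynomial.eval z p).re := by
  have hz0 : Polynomial.eval z p ≠ 0 := fun h => absurd (hp.2 z h) (not_lt.mpr hz)
  have hroots : p.roots ≠ 0 := by
    intro h
    have hcard := (IsAlgClosed.splits p).natDegree_eq_card_roots
    rw [h, Multiset.card_zero] at hcard
    have := Polynomial.degree_le_of_natDegree_le hcard.le
    exact absurd (hd.trans this) (by norm_num)
  rw [(IsAlgClosed.splits p).eval_derivative_div_eval_of_ne_zero hz0,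
    ← Complex.reCLM_apply, map_multiset_sum, Multiset.map_map]
  have key := Multiset.sum_lt_sum_of_nonempty (s := p.roots) (f := fun _ => (0 : ℝ))
    (g := fun r => (1 / (z - r)).re) hroots (by
      intro r hr
      have hr' : r.re < 0 := hp.2 r (Polynomial.isRoot_of_mem_roots hr)
      have hre : 0 < (z - r).re := by rw [Complex.sub_re]; linarith
      have hne : z - r ≠ 0 := fun h => by simp [h] at hre
      rw [one_div, Complex.inv_re]
      exact div_pos hre (Complex.normSq_pos.mpr hne))
  simpa using key

/-- If `p, q` are Hurwitz stable of degree at least one and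
`λ p(iω₀) + (1-λ) q(iω₀) = 0` for some `λ ∈ (0,1)`, then `(q-p)(iω₀) ≠ 0`,
`(q'-p')/(q-p)` at `iω₀` equals `(1-λ) p'/p + λ q'/q` at `iω₀`, and in
particular its real part (the derivative of the argument of `(q-p)(iω)` at
`ω₀`) is strictly positive. -/
theorem convex_combination_zero_arg_increasing
    (p q : Polynomial ℂ)
    (hp : HurwitzStableC p) (hq : HurwitzStableC q)
    (hdp : 1 ≤ p.degree) (hdq : 1 ≤ q.degree)
    (lam : ℝ) (hlam : lam ∈ Set.Ioo (0 : ℝ) 1) (ω₀ : ℝ)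
    (hzero : (lam : ℂ) * Polynomial.eval ((ω₀ : ℂ) * Complex.I) p +
        (1 - (lam : ℂ)) * Polynomial.eval ((ω₀ : ℂ) * Complex.I) q = 0) :
    Polynomial.eval ((ω₀ : ℂ) * Complex.I) q -
        Polynomial.eval ((ω₀ : ℂ) * Complex.I) p ≠ 0 ∧
    (Polynomial.eval ((ω₀ : ℂ) * Complex.I) (Polynomial.derivative q) -
          Polynomial.eval ((ω₀ : ℂ) * Complex.I) (Polynomial.derivative p)) /
        (Polynomial.eval ((ω₀ : ℂ) * Complex.I) q -
          Polynomial.eval ((ω₀ : ℂ) * Complex.I) p) =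
      (1 - (lam : ℂ)) *
          (Polynomial.eval ((ω₀ : ℂ) * Complex.I) (Polynomial.derivative p) /
            Polynomial.eval ((ω₀ : ℂ) * Complex.I) p) +
        (lam : ℂ) *
          (Polynomial.eval ((ω₀ : ℂ) * Complex.I) (Polynomial.derivative q) /
            Polynomial.eval ((ω₀ : ℂ) * Complex.I) q) ∧
    0 < ((Polynomial.eval ((ω₀ : ℂ) * Complex.I) (Polynomial.derivative q) -
            Polynomial.eval ((ω₀ : ℂ) * Complex.I) (Polynomial.derivative p)) /
          (Polynomial.eval ((ω₀ : ℂ) * Complex.I) q -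
            Polynomial.eval ((ω₀ : ℂ) * Complex.I) p)).re := by
  obtain ⟨hl0, hl1⟩ := hlam
  have hz : 0 ≤ ((ω₀ : ℂ) * Complex.I).re := by simp
  have hP := hp.re_derivative_div_pos hdp hz
  have hQ := hq.re_derivative_div_pos hdq hz
  have hP0 : Polynomial.eval ((ω₀ : ℂ) * Complex.I) p ≠ 0 := fun h => by simp [h] at hP
  have hQ0 : Polynomial.eval ((ω₀ : ℂ) * Complex.I) q ≠ 0 := fun h => by simp [h] at hQ
  generalize Polynomial.eval ((ω₀ : ℂ) * Complex.I) (Polynomial.derivative p) = P' at *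
  generalize Polynomial.eval ((ω₀ : ℂ) * Complex.I) (Polynomial.derivative q) = Q' at *
  generalize Polynomial.eval ((ω₀ : ℂ) * Complex.I) p = P at *
  generalize Polynomial.eval ((ω₀ : ℂ) * Complex.I) q = Q at *
  have hL : (lam : ℂ) ≠ 0 := by exact_mod_cast hl0.ne'
  have hne : Q - P ≠ 0 := by
    intro h
    apply hQ0
    linear_combination hzero + (lam : ℂ) * h
  have heq : (Q' - P') / (Q - P) = (1 - (lam : ℂ)) * (P' / P) + (lam : ℂ) * (Q' / Q) := by
    have h1 : (lam : ℂ) * (Q - P) = Q := by linear_combination -hzero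
    have h2 : (1 - (lam : ℂ)) * (Q - P) = -P := by linear_combination hzero
    have hQ' : (lam : ℂ) * (Q' / Q) = Q' / (Q - P) := by
      rw [← mul_div_assoc, div_eq_div_iff hQ0 hne]
      linear_combination Q' * h1
    have hP' : (1 - (lam : ℂ)) * (P' / P) = -P' / (Q - P) := by
      rw [← mul_div_assoc, div_eq_div_iff hP0 hne]
      linear_combination P' * h2
    rw [hQ', hP']
    ring
  refine ⟨hne, heq, ?_⟩
  rw [heq, ← Complex.ofReal_one, ← Complex.ofReal_sub, Complex.add_re, Complex.re_ofReal_mul,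
    Complex.re_ofReal_mul]
  exact add_pos (mul_pos (sub_pos.mpr hl1) hP) (mul_pos hl0 hQ)
end
end
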